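/- arXiv:math/0405245 — 2 statements merged into one kernel-verified Lean document; each statement's English description precedes it below -/
import Mathlib

section
/- Let ξ ∈ ℂ with Re(ξ) > 0 and let p ∈ ℝ be fixed. Then, as the even positive integer H tends to infinity, the lattice sums c_ξ(p) converge to the principal square root reciprocal of ξ: lim_{H→∞, H even} ∑_{z=−H²/2}^{H²/2−1} (1/H)·exp(−ξπ(z/H + (i/ξ)p)²) = ξ^{−1/2}, where ξ^{−1/2} = exp(−(1/2)·Log ξ) with Log the principal branch of the logarithm. -/
open Complex Filter Topology in
/-- The lattice Gaussian, expanded as a constant times a quadratic exponential in `z`. -/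
theorem cexp_lattice_gaussian_eq {ξ : ℂ} (hξ : ξ ≠ 0) (p : ℝ) {H : ℕ} (hH : H ≠ 0) (z : ℤ) :
    cexp (-(ξ * Real.pi * ((z : ℂ) / (H : ℂ) + I / ξ * (p : ℂ)) ^ 2)) =
      cexp (Real.pi * p ^ 2 / ξ) *
        cexp (-Real.pi * (ξ / (H : ℂ) ^ 2) * (z : ℂ) ^ 2 +
          2 * Real.pi * (-(I * p / H)) * (z : ℂ)) := by
  have hH' : (H : ℂ) ≠ 0 := Nat.cast_ne_zero.mpr hH
  rw [← Complex.exp_add]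
  congr 1
  field_simp
  ring_nf
  simp only [I_sq]
  ring

open Complex in
theorem norm_cexp_lattice_gaussian {ξ : ℂ} (hξ : ξ ≠ 0) (p : ℝ) {H : ℕ} (hH : H ≠ 0) (z : ℤ) :
    ‖cexp (-(ξ * Real.pi * ((z : ℂ) / (H : ℂ) + I / ξ * (p : ℂ)) ^ 2))‖ =
      ‖cexp (Real.pi * p ^ 2 / ξ)‖ * Real.exp (-(Real.pi * ξ.re * ((z : ℝ) ^ 2 / (H : ℝ) ^ 2))) := by
  rw [cexp_lattice_gaussian_eq hξ p hH, norm_mul, Complex.norm_exp (_ + _)]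
  congr 2
  have h : (-Real.pi * (ξ / (H : ℂ) ^ 2) * (z : ℂ) ^ 2 +
      2 * Real.pi * (-(I * p / H)) * (z : ℂ)) =
      ((-(Real.pi * ((z : ℝ) ^ 2 / (H : ℝ) ^ 2)) : ℝ) : ℂ) * ξ +
        ((-(2 * Real.pi * p * z / H) : ℝ) : ℂ) * I := by
    push_cast
    ring
  rw [h, add_re, re_ofReal_mul, re_ofReal_mul, I_re]
  ring

theorem summable_exp_neg_mul_abs_int {c : ℝ} (hc : 0 < c) :
    Summable fun z : ℤ => Real.exp (-(c * |(z : ℝ)|)) := by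
  have h : Summable fun n : ℕ => Real.exp (-(c * (n : ℝ))) := by
    refine (Real.summable_exp_nat_mul_iff.mpr (neg_lt_zero.mpr hc)).congr fun n => ?_
    ring_nf
  refine Summable.of_nat_of_neg ?_ ?_ <;> simpa using h

theorem abs_int_le_sq (z : ℤ) : |(z : ℝ)| ≤ (z : ℝ) ^ 2 := by
  have h : |z| ≤ z ^ 2 := by
    rw [← sq_abs]
    nlinarith [abs_nonneg z, Int.le_self_sq |z|]
  exact_mod_cast h

open Complex in
theorem summable_cexp_lattice_gaussian {ξ : ℂ} (hξ : 0 < ξ.re) (p : ℝ) {H : ℕ} (hH : H ≠ 0) :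
    Summable fun z : ℤ =>
      cexp (-(ξ * Real.pi * ((z : ℂ) / (H : ℂ) + I / ξ * (p : ℂ)) ^ 2)) := by
  have hξ0 : ξ ≠ 0 := by rintro rfl; simp at hξ
  have hH' : (0 : ℝ) < H := Nat.cast_pos.mpr (Nat.pos_of_ne_zero hH)
  have hc : 0 < Real.pi * ξ.re / (H : ℝ) ^ 2 := by positivity
  refine Summable.of_norm_bounded
    ((summable_exp_neg_mul_abs_int hc).mul_left ‖cexp (Real.pi * p ^ 2 / ξ)‖) fun z => ?_
  rw [norm_cexp_lattice_gaussian hξ0 p hH]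
  refine mul_le_mul_of_nonneg_left (Real.exp_le_exp.mpr (neg_le_neg ?_)) (norm_nonneg _)
  calc Real.pi * ξ.re / (H : ℝ) ^ 2 * |(z : ℝ)| ≤ Real.pi * ξ.re / (H : ℝ) ^ 2 * (z : ℝ) ^ 2 := by
        gcongr
        exact abs_int_le_sq z
    _ = _ := by ring

open Complex in
/-- Poisson summation for the full lattice Gaussian sum. -/
theorem tsum_cexp_lattice_gaussian {ξ : ℂ} (hξ : 0 < ξ.re) (p : ℝ) {H : ℕ} (hH : H ≠ 0) :
    (H : ℂ)⁻¹ * ∑' z : ℤ, cexp (-(ξ * Real.pi * ((z : ℂ) / (H : ℂ) + I / ξ * (p : ℂ)) ^ 2)) =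
      cexp (-(1 / 2) * log ξ) *
        ∑' n : ℤ, cexp (((-(Real.pi * ((H * n) ^ 2 + 2 * (H * n) * p)) : ℝ) : ℂ) * ξ⁻¹) := by
  have hξ0 : ξ ≠ 0 := by rintro rfl; simp at hξ
  have hHpos : (0 : ℝ) < H := Nat.cast_pos.mpr (Nat.pos_of_ne_zero hH)
  have hH' : (H : ℂ) ≠ 0 := Nat.cast_ne_zero.mpr hH
  have hξH : ξ / (H : ℂ) ^ 2 = (((H : ℝ) ^ 2)⁻¹ : ℝ) * ξ := by
    push_cast
    ring
  have hre : 0 < (ξ / (H : ℂ) ^ 2).re := by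
    rw [hξH, re_ofReal_mul]
    positivity
  have hroot : 1 / (ξ / (H : ℂ) ^ 2) ^ (1 / 2 : ℂ) = H * cexp (-(1 / 2) * log ξ) := by
    rw [cpow_def_of_ne_zero (by rintro h; simp [h] at hre), hξH,
      log_ofReal_mul (by positivity) hξ0, Real.log_inv, Real.log_pow, one_div, ← Complex.exp_neg]
    rw [show -((((-(((2 : ℕ) : ℝ) * Real.log H) : ℝ) : ℂ) + log ξ) * (1 / 2)) =
      ((Real.log H : ℝ) : ℂ) + -(1 / 2) * log ξ by push_cast; ring, Complex.exp_add,
      ← ofReal_exp, Real.exp_log hHpos, ofReal_natCast]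
  simp_rw [cexp_lattice_gaussian_eq hξ0 p hH]
  rw [tsum_mul_left, tsum_exp_neg_quadratic hre, hroot]
  have hterm : ∀ n : ℤ, cexp (((-(Real.pi * ((H * n) ^ 2 + 2 * (H * n) * p)) : ℝ) : ℂ) * ξ⁻¹) =
      cexp (Real.pi * p ^ 2 / ξ) *
        cexp (-Real.pi / (ξ / (H : ℂ) ^ 2) * ((n : ℂ) + I * (-(I * p / H))) ^ 2) := by
    intro n
    have hI : I * (-(I * (p : ℂ) / H)) = p / H := by
      linear_combination (-(p : ℂ) / H) * I_sq
    rw [← Complex.exp_add, hI]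
    congr 1
    push_cast
    field_simp
    ring
  simp_rw [hterm]
  rw [tsum_mul_left]
  field_simp

open Complex Filter Topology in
/-- The dual lattice sum converges to its zeroth term. -/
theorem tendsto_tsum_cexp_dual_lattice {w : ℂ} (hw : 0 < w.re) (p : ℝ) :
    Tendsto (fun H : ℕ =>
      ∑' n : ℤ, cexp (((-(Real.pi * ((H * n) ^ 2 + 2 * (H * n) * p)) : ℝ) : ℂ) * w))
      atTop (𝓝 1) := by
  have hlower : ∀ᶠ H : ℕ in atTop, ∀ n : ℤ,
      (H : ℝ) * |(n : ℝ)| / 2 ≤ (H * n) ^ 2 + 2 * (H * n) * p := by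
    filter_upwards [eventually_ge_atTop 1,
      tendsto_natCast_atTop_atTop.eventually_ge_atTop (4 * |p| + 1)] with H h1 hp n
    have h1' : (1 : ℝ) ≤ H := by exact_mod_cast h1
    have hn := abs_int_le_sq n
    have hcross : -(2 * (H * |(n : ℝ)|) * |p|) ≤ 2 * (H * n) * p := by
      have := neg_abs_le (2 * (H * (n : ℝ)) * p)
      simpa [abs_mul] using this
    have ha : 0 ≤ (H : ℝ) * |(n : ℝ)| := by positivity
    have hsq : (H : ℝ) * (H * |(n : ℝ)|) ≤ (H * n) ^ 2 := by
      rw [mul_pow, ← mul_assoc, ← sq]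
      gcongr
    nlinarith [mul_le_mul_of_nonneg_right hp ha, mul_le_mul_of_nonneg_right h1' ha]
  have hnorm : ∀ᶠ H : ℕ in atTop, ∀ n : ℤ,
      ‖cexp (((-(Real.pi * ((H * n) ^ 2 + 2 * (H * n) * p)) : ℝ) : ℂ) * w)‖ ≤
        Real.exp (-(Real.pi * w.re / 2 * |(n : ℝ)| * H)) := by
    filter_upwards [hlower] with H h n
    rw [Complex.norm_exp, re_ofReal_mul]
    have := mul_le_mul_of_nonneg_left (h n) (mul_pos Real.pi_pos hw).le
    gcongr
    linarith
  have hc : 0 < Real.pi * w.re / 2 := by positivity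
  rw [← tsum_ite_eq (0 : ℤ) fun _ => (1 : ℂ)]
  refine tendsto_tsum_of_dominated_convergence (summable_exp_neg_mul_abs_int hc) ?_ ?_
  · intro n
    split_ifs with hn
    · simp [hn]
    · refine squeeze_zero_norm' (hnorm.mono fun H h => h n) ?_
      have hn' : 0 < Real.pi * w.re / 2 * |(n : ℝ)| := by positivity
      exact Real.tendsto_exp_neg_atTop_nhds_zero.comp
        (tendsto_natCast_atTop_atTop.const_mul_atTop hn')
  · filter_upwards [hnorm, eventually_ge_atTop 1] with H h h1 n
    refine (h n).trans (Real.exp_le_exp.mpr (neg_le_neg ?_))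
    exact le_mul_of_one_le_right (by positivity) (by exact_mod_cast h1)

open Complex Filter Topology in
/-- The part of the lattice Gaussian sum outside the window `[-H²/2, H²/2)` is negligible. -/
theorem tendsto_tsum_compl_cexp_lattice_gaussian {ξ : ℂ} (hξ : 0 < ξ.re) (p : ℝ) :
    Tendsto (fun H : ℕ => ∑' z : ℤ,
      (↑(Finset.Ico (-((H : ℤ) ^ 2 / 2)) ((H : ℤ) ^ 2 / 2)) : Set ℤ)ᶜ.indicator (fun z : ℤ =>
        cexp (-(ξ * Real.pi * ((z : ℂ) / (H : ℂ) + I / ξ * (p : ℂ)) ^ 2))) z)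
      atTop (𝓝 0) := by
  have hξ0 : ξ ≠ 0 := by rintro rfl; simp at hξ
  have hc : 0 < Real.pi * ξ.re / 4 := by positivity
  rw [← tsum_zero (α := ℂ) (β := ℤ)]
  refine tendsto_tsum_of_dominated_convergence
    ((summable_exp_neg_mul_abs_int hc).mul_left ‖cexp (Real.pi * p ^ 2 / ξ)‖) ?_ ?_
  · intro z
    refine tendsto_const_nhds.congr' ?_
    filter_upwards [eventually_ge_atTop (2 * z.natAbs + 2)] with H hH
    refine (Set.indicator_of_notMem ?_ _).symm
    rw [Set.notMem_compl_iff, Finset.mem_coe, Finset.mem_Ico]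
    have hH' : 2 * |z| + 2 ≤ (H : ℤ) := by rw [Int.abs_eq_natAbs]; exact_mod_cast hH
    have h2 : |z| + 1 ≤ (H : ℤ) ^ 2 / 2 := by
      rw [Int.le_ediv_iff_mul_le two_pos]
      nlinarith [abs_nonneg z]
    constructor <;> linarith [neg_abs_le z, le_abs_self z]
  · filter_upwards [eventually_ge_atTop 2] with H hH z
    by_cases hz : z ∈ (↑(Finset.Ico (-((H : ℤ) ^ 2 / 2)) ((H : ℤ) ^ 2 / 2)) : Set ℤ)ᶜ
    · rw [Set.indicator_of_mem hz, norm_cexp_lattice_gaussian hξ0 p (by lia)]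
      rw [Set.mem_compl_iff, Finset.mem_coe, Finset.mem_Ico] at hz
      have h4 : 4 ≤ (H : ℤ) ^ 2 := by
        have : (2 : ℤ) ≤ H := by exact_mod_cast hH
        nlinarith
      have hz' : (H : ℤ) ^ 2 ≤ 4 * |z| := by
        generalize (H : ℤ) ^ 2 = m at *
        rcases abs_cases z with ⟨h, _⟩ | ⟨h, _⟩ <;> rw [h] <;> lia
      have hzR : (H : ℝ) ^ 2 ≤ 4 * |(z : ℝ)| := by exact_mod_cast hz'
      have hpos : (0 : ℝ) < (H : ℝ) ^ 2 := by
        have : (0 : ℝ) < H := by exact_mod_cast (by lia : 0 < H)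
        positivity
      have hkey : |(z : ℝ)| / 4 ≤ (z : ℝ) ^ 2 / (H : ℝ) ^ 2 := by
        rw [div_le_div_iff₀ four_pos hpos, ← sq_abs (z : ℝ)]
        nlinarith [mul_le_mul_of_nonneg_left hzR (abs_nonneg (z : ℝ))]
      refine mul_le_mul_of_nonneg_left (Real.exp_le_exp.mpr (neg_le_neg ?_)) (norm_nonneg _)
      calc Real.pi * ξ.re / 4 * |(z : ℝ)| = Real.pi * ξ.re * (|(z : ℝ)| / 4) := by ring
        _ ≤ _ := by gcongr
    · rw [Set.indicator_of_notMem hz, norm_zero]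
      positivity

/-- For `Re ξ > 0` and a fixed real `p`, the lattice sums
`c_ξ(p) = ∑_{z=−H²/2}^{H²/2−1} (1/H)·exp(−ξπ(z/H + (i/ξ)p)²)` converge, as the even
positive integer `H` tends to infinity, to the principal square-root reciprocal
`ξ^{−1/2} = exp(−(1/2)·Log ξ)`. -/
theorem lattice_gaussian_sum_tendsto (ξ : ℂ) (hξ : 0 < ξ.re) (p : ℝ) :
    Filter.Tendsto
      (fun H : ℕ => (Finset.Ico (-((H : ℤ) ^ 2 / 2)) ((H : ℤ) ^ 2 / 2)).sum
        (fun z : ℤ => (H : ℂ)⁻¹ *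
          Complex.exp (-(ξ * Real.pi * ((z : ℂ) / (H : ℂ) + Complex.I / ξ * (p : ℂ)) ^ 2))))
      (Filter.atTop ⊓ Filter.principal {H : ℕ | Even H})
      (nhds (Complex.exp (-(1 / 2) * Complex.log ξ))) := by
  refine Filter.Tendsto.mono_left ?_ inf_le_left
  have hξ0 : ξ ≠ 0 := by rintro rfl; simp at hξ
  have hinv : 0 < (ξ⁻¹).re := by
    rw [Complex.inv_re]
    exact div_pos hξ (Complex.normSq_pos.mpr hξ0)
  have hlim := ((tendsto_tsum_cexp_dual_lattice hinv p).const_mul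
    (Complex.exp (-(1 / 2) * Complex.log ξ))).sub
    ((tendsto_inv_atTop_nhds_zero_nat (𝕜 := ℂ)).mul (tendsto_tsum_compl_cexp_lattice_gaussian hξ p))
  rw [mul_one, mul_zero, sub_zero] at hlim
  refine hlim.congr' ?_
  filter_upwards [Filter.eventually_ne_atTop 0] with H hH
  have hsum := summable_cexp_lattice_gaussian hξ p hH
  rw [← tsum_cexp_lattice_gaussian hξ p hH, ← Finset.mul_sum, ← mul_sub,
    ← hsum.sum_add_tsum_compl (s := Finset.Ico (-((H : ℤ) ^ 2 / 2)) ((H : ℤ) ^ 2 / 2)),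
    ← tsum_subtype]
  exact congrArg _ (add_sub_cancel_right _ _)
end

section
/- Let H be a positive even integer and let m be a nonzero integer with m | 2H². Define φ_{im}(x) = exp(−iπmx²) on L_H. Then for every p = t/H ∈ L_H with t ∈ ℤ and m | t, (Fφ_{im})(p) = c_{im}·exp(iπp²/m), where c_{im} = √(m/2)·(1 + i^{2H²/m})/(1 + i) if m > 0, and c_{im} = √(−m/2)·(1 + (−i)^{2H²/(−m)})/(1 − i) if m < 0. -/
/-- The canonical integer representative `z` of `u ∈ ℤ/H²ℤ` with `−H²/2 ≤ z < H²/2`,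
so that the lattice point of `L_H` corresponding to `u` is `εz = z/H`. -/
def latLift (H : ℕ) (u : ZMod (H ^ 2)) : ℤ :=
  if (u.val : ℤ) < ((H : ℤ) ^ 2) / 2 then (u.val : ℤ) else (u.val : ℤ) - (H : ℤ) ^ 2

/-- The lattice point `εz ∈ L_H ⊆ ℚ ⊆ ℂ` corresponding to `u ∈ ℤ/H²ℤ`. -/
noncomputable def latC (H : ℕ) (u : ZMod (H ^ 2)) : ℂ :=
  (latLift H u : ℂ) / (H : ℂ)

/-- The infinitesimal Fourier transform `(Fφ)(p) = ∑_{x ∈ L_H} ε · exp(−2πipx) · φ(x)`. -/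
noncomputable def Ftrans (H : ℕ) [NeZero H] (φ : ZMod (H ^ 2) → ℂ) (p : ZMod (H ^ 2)) : ℂ :=
  ∑ x : ZMod (H ^ 2),
    (H : ℂ)⁻¹ * Complex.exp (-(2 * Real.pi * Complex.I * latC H p * latC H x)) * φ x

open Filter Topology

/-- Positive real factors can be pulled out of complex powers. -/
lemma Complex.ofReal_mul_cpow {T : ℝ} (hT : 0 < T) {u : ℂ} (hu : u ≠ 0) (s : ℂ) :
    ((T : ℂ) * u) ^ s = (T : ℂ) ^ s * u ^ s := by
  have hT' : (T : ℂ) ≠ 0 := by exact_mod_cast hT.ne'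
  rw [Complex.cpow_def_of_ne_zero (mul_ne_zero hT' hu), Complex.cpow_def_of_ne_zero hT',
    Complex.cpow_def_of_ne_zero hu, Complex.log_ofReal_mul hT hu, ← Complex.exp_add,
    Complex.ofReal_log hT.le]
  ring_nf

lemma summable_exp_neg_mul_int_sq {c : ℝ} (hc : 0 < c) :
    Summable fun k : ℤ => Real.exp (-Real.pi * c * (k : ℝ) ^ 2) := by
  have h := summable_pow_mul_jacobiTheta₂_term_bound 0 hc 0
  refine h.congr fun k => ?_
  rw [pow_zero, one_mul]
  ring_nf

lemma norm_exp_neg_pi_mul_int_sq (a : ℂ) (k : ℤ) :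
    ‖Complex.exp (-Real.pi * a * (k : ℂ) ^ 2)‖ = Real.exp (-Real.pi * a.re * (k : ℝ) ^ 2) := by
  rw [Complex.norm_exp]
  congr 1
  have h : (-Real.pi * a * (k : ℂ) ^ 2 : ℂ) = ((-Real.pi * (k : ℝ) ^ 2 : ℝ) : ℂ) * a := by
    push_cast; ring
  rw [h, Complex.re_ofReal_mul]
  ring

/-- A Gaussian sum with real phase is dominated by its zeroth term as the width shrinks. -/
lemma tendsto_tsum_gaussian_phase {ι : Type*} {l : Filter ι} [l.IsCountablyGenerated]
    {v : ι → ℂ} (hv : Tendsto (fun i => (v i).re) l atTop) (θ : ℝ) :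
    Tendsto (fun i => ∑' k : ℤ, Complex.exp (-Real.pi * v i * (k : ℂ) ^ 2
      + 2 * Real.pi * (-(Complex.I * θ)) * k)) l (𝓝 1) := by
  have hnorm : ∀ (w : ℂ) (k : ℤ), ‖Complex.exp (-Real.pi * w * (k : ℂ) ^ 2
      + 2 * Real.pi * (-(Complex.I * θ)) * k)‖ = Real.exp (-Real.pi * w.re * (k : ℝ) ^ 2) := by
    intro w k
    rw [Complex.exp_add, norm_mul, norm_exp_neg_pi_mul_int_sq]
    have h : (2 * Real.pi * (-(Complex.I * θ)) * k : ℂ)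
        = ((-(2 * Real.pi * θ * k) : ℝ) : ℂ) * Complex.I := by push_cast; ring
    rw [h, Complex.norm_exp_ofReal_mul_I, mul_one]
  have key := tendsto_tsum_of_dominated_convergence (𝓕 := l)
    (f := fun i (k : ℤ) => Complex.exp (-Real.pi * v i * (k : ℂ) ^ 2
      + 2 * Real.pi * (-(Complex.I * θ)) * k))
    (g := fun k : ℤ => if k = 0 then (1 : ℂ) else 0)
    (summable_exp_neg_mul_int_sq one_pos) ?_ ?_
  · simpa using key
  · intro k
    by_cases hk : k = 0
    · simpa [hk] using tendsto_const_nhds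
    · simp only [hk, if_false]
      rw [tendsto_zero_iff_norm_tendsto_zero]
      simp only [hnorm]
      refine Real.tendsto_exp_atBot.comp ?_
      have hk' : (0 : ℝ) < Real.pi * (k : ℝ) ^ 2 := by positivity
      refine (tendsto_neg_atTop_atBot.comp (hv.const_mul_atTop hk')).congr fun i => ?_
      simp only [Function.comp]
      ring
  · filter_upwards [hv.eventually_ge_atTop 1] with i hi k
    rw [hnorm]
    gcongr Real.exp ?_
    have : 0 ≤ Real.pi * (k : ℝ) ^ 2 := by positivity
    nlinarith

/-- Poisson summation along an arithmetic progression. -/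
lemma tsum_gaussian_progression (n : ℕ) (hn : n ≠ 0) (r : ℝ) {v : ℂ} (hv : 0 < v.re) :
    ∑' k : ℤ, Complex.exp (-Real.pi * v⁻¹ * ((k : ℂ) * n + r) ^ 2)
      = v ^ (1 / 2 : ℂ) / n * ∑' k : ℤ, Complex.exp (-Real.pi * (((n : ℝ) ^ 2)⁻¹ • v) * (k : ℂ) ^ 2
          + 2 * Real.pi * (-(Complex.I * (r / n : ℝ))) * k) := by
  have hv0 : v ≠ 0 := by rintro rfl; simp at hv
  have hnR : (0 : ℝ) < n := by positivity
  have hnC : (n : ℂ) ≠ 0 := by exact_mod_cast hn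
  have ha : 0 < (((n : ℝ) ^ 2)⁻¹ • v).re := by
    rw [Complex.smul_re, smul_eq_mul]; positivity
  have h := Complex.tsum_exp_neg_quadratic ha (-(Complex.I * (r / n : ℝ)))
  rw [h]
  have hpow : (((n : ℝ) ^ 2)⁻¹ • v) ^ (1 / 2 : ℂ) = v ^ (1 / 2 : ℂ) / n := by
    rw [Complex.real_smul, Complex.ofReal_mul_cpow (by positivity) hv0]
    have : ((((n : ℝ) ^ 2)⁻¹ : ℝ) : ℂ) ^ (1 / 2 : ℂ) = (n : ℂ)⁻¹ := by
      rw [show (1 / 2 : ℂ) = ((1 / 2 : ℝ) : ℂ) by push_cast; rfl,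
        ← Complex.ofReal_cpow (by positivity), ← Real.sqrt_eq_rpow, Real.sqrt_inv,
        Real.sqrt_sq hnR.le]
      push_cast; rfl
    rw [this]; ring
  have hv2 : v ^ (1 / 2 : ℂ) ≠ 0 := by simp [Complex.cpow_eq_zero_iff, hv0]
  rw [hpow, ← mul_assoc]
  rw [show v ^ (1 / 2 : ℂ) / n * (1 / (v ^ (1 / 2 : ℂ) / n)) = 1 by field_simp, one_mul]
  refine tsum_congr fun k => ?_
  congr 1
  rw [Complex.real_smul]
  push_cast
  have hI : (k : ℂ) + Complex.I * -(Complex.I * (r / n)) = k + r / n := by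
    linear_combination (-(r / n : ℂ)) * Complex.I_sq
  rw [hI]
  field_simp

/-- Splitting of a Gaussian sum with periodic weights into residue classes. -/
lemma tsum_periodic_mul_gaussian (n : ℕ) [NeZero n] (f : ℤ → ℂ)
    (hf : Function.Periodic f (n : ℤ)) {a : ℂ} (ha : 0 < a.re) :
    ∑' k : ℤ, f k * Complex.exp (-Real.pi * a * (k : ℂ) ^ 2)
      = ∑ r : Fin n, f r * ∑' k : ℤ, Complex.exp (-Real.pi * a * ((k : ℂ) * n + (r : ℕ)) ^ 2) := by
  have hfr : ∀ (k : ℤ) (r : Fin n), f (k * n + (r : ℕ)) = f r := by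
    intro k r
    rw [add_comm]
    exact hf.int_mul k _
  have hS : Summable fun k : ℤ => f k * Complex.exp (-Real.pi * a * (k : ℂ) ^ 2) := by
    refine ((summable_exp_neg_mul_int_sq ha).mul_left (∑ r : Fin n, ‖f r‖)).of_norm_bounded
      fun k => ?_
    rw [norm_mul, norm_exp_neg_pi_mul_int_sq]
    gcongr
    obtain ⟨⟨q, r⟩, rfl⟩ := (Int.divModEquiv n).symm.surjective k
    rw [Int.divModEquiv_symm_apply]
    simp only [hfr]
    exact Finset.single_le_sum (f := fun r : Fin n => ‖f r‖) (fun _ _ => norm_nonneg _)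
      (Finset.mem_univ r)
  have hS' := (Int.divModEquiv n).symm.summable_iff.mpr hS
  rw [← (Int.divModEquiv n).symm.tsum_eq, ← (Equiv.prodComm (Fin n) ℤ).tsum_eq]
  have hS'' := (Equiv.prodComm (Fin n) ℤ).summable_iff.mpr hS'
  have h := hS''.tsum_prod
  simp only [Function.comp_def] at h
  rw [h, tsum_fintype]
  refine Finset.sum_congr rfl fun r _ => ?_
  rw [← tsum_mul_left]
  refine tsum_congr fun k => ?_
  simp [Int.divModEquiv_symm_apply, hfr]

/-- The mean of a periodic function is recovered from its Gaussian averages. -/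
lemma tendsto_gaussian_average {ι : Type*} {l : Filter ι} [l.IsCountablyGenerated]
    {v : ι → ℂ} (hv : Tendsto (fun i => (v i).re) l atTop) (n : ℕ) [NeZero n] (f : ℤ → ℂ)
    (hf : Function.Periodic f (n : ℤ)) :
    Tendsto (fun i => (∑' k : ℤ, f k * Complex.exp (-Real.pi * (v i)⁻¹ * (k : ℂ) ^ 2))
      / v i ^ (1 / 2 : ℂ)) l (𝓝 ((∑ r : Fin n, f r) / n)) := by
  have hn : n ≠ 0 := NeZero.ne n
  have hv' : Tendsto (fun i => (((n : ℝ) ^ 2)⁻¹ • v i).re) l atTop := by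
    simp only [Complex.smul_re, smul_eq_mul]
    exact hv.const_mul_atTop (by positivity)
  have hlim : Tendsto (fun i => ∑ r : Fin n, f r / n *
      ∑' k : ℤ, Complex.exp (-Real.pi * (((n : ℝ) ^ 2)⁻¹ • v i) * (k : ℂ) ^ 2
          + 2 * Real.pi * (-(Complex.I * (((r : ℕ) : ℝ) / n : ℝ))) * k)) l
      (𝓝 (∑ r : Fin n, f r / n * 1)) :=
    tendsto_finsetSum _ fun r _ =>
      (tendsto_tsum_gaussian_phase hv' _).const_mul _
  rw [Finset.sum_div]
  simp only [mul_one] at hlim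
  refine hlim.congr' ?_
  filter_upwards [hv.eventually_gt_atTop 0] with i hi
  have hv0 : v i ≠ 0 := by rintro h; simp [h] at hi
  have hv2 : v i ^ (1 / 2 : ℂ) ≠ 0 := by simp [Complex.cpow_eq_zero_iff, hv0]
  have ha : 0 < ((v i)⁻¹).re := by
    rw [Complex.inv_re]; exact div_pos hi (Complex.normSq_pos.mpr hv0)
  rw [tsum_periodic_mul_gaussian n f hf ha, Finset.sum_div]
  refine Finset.sum_congr rfl fun r _ => ?_
  have h := tsum_gaussian_progression n hn ((r : ℕ) : ℝ) hi
  rw [Complex.ofReal_natCast] at h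
  rw [h]
  field_simp

lemma Complex.I_cpow_half : Complex.I ^ (1 / 2 : ℂ) = (1 + Complex.I) / (Real.sqrt 2 : ℂ) := by
  rw [Complex.cpow_def_of_ne_zero Complex.I_ne_zero, Complex.log_I,
    show (Real.pi / 2 * Complex.I * (1 / 2) : ℂ) = ((Real.pi / 4 : ℝ) : ℂ) * Complex.I by
      push_cast; ring,
    Complex.exp_mul_I, ← Complex.ofReal_cos, ← Complex.ofReal_sin, Real.cos_pi_div_four,
    Real.sin_pi_div_four]
  have h : ((Real.sqrt 2 : ℝ) : ℂ) ^ 2 = 2 := by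
    rw [← Complex.ofReal_pow, Real.sq_sqrt (by norm_num)]; norm_num
  have h0 : ((Real.sqrt 2 : ℝ) : ℂ) ≠ 0 := by
    intro h'; rw [h'] at h; norm_num at h
  push_cast
  field_simp
  rw [h]

lemma Complex.ofReal_cpow_half {x : ℝ} (hx : 0 ≤ x) :
    (x : ℂ) ^ (1 / 2 : ℂ) = (Real.sqrt x : ℂ) := by
  rw [show (1 / 2 : ℂ) = ((1 / 2 : ℝ) : ℂ) by push_cast; rfl,
    ← Complex.ofReal_cpow hx, ← Real.sqrt_eq_rpow]

lemma periodic_exp_neg_sq_div (n : ℕ) [NeZero n] :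
    Function.Periodic
      (fun k : ℤ => Complex.exp (-(2 * Real.pi * Complex.I * (k : ℂ) ^ 2 / n))) (n : ℤ) := by
  intro k
  have hn : (n : ℂ) ≠ 0 := by exact_mod_cast NeZero.ne n
  refine Complex.exp_eq_exp_iff_exists_int.mpr ⟨-(2 * k + n), ?_⟩
  push_cast
  field_simp
  ring

lemma periodic_exp_half_mul_sq (n : ℕ) :
    Function.Periodic
      (fun k : ℤ => Complex.exp (Real.pi * Complex.I * n * (k : ℂ) ^ 2 / 2)) ((2 : ℕ) : ℤ) := by
  intro k
  refine Complex.exp_eq_exp_iff_exists_int.mpr ⟨n * (k + 1), ?_⟩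
  push_cast
  ring

/-- Evaluation of the quadratic Gauss sum for an arbitrary modulus. -/
theorem sum_exp_neg_sq_div (n : ℕ) [NeZero n] :
    ∑ r : Fin n, Complex.exp (-(2 * Real.pi * Complex.I * ((r : ℕ) : ℂ) ^ 2 / n))
      = Real.sqrt n * (1 + Complex.I ^ n) / (1 + Complex.I) := by
  have hn : n ≠ 0 := NeZero.ne n
  have hnR : (0 : ℝ) < n := by positivity
  have hnC : (n : ℂ) ≠ 0 := by exact_mod_cast hn
  let v : ℝ → ℂ := fun T => 4 * T / n ^ 2 - 2 * Complex.I / n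
  let a : ℝ → ℂ := fun T => (T : ℂ)⁻¹ + 2 * Complex.I / n
  have hvre : ∀ T, (v T).re = 4 / n ^ 2 * T := by
    intro T
    have : v T = ((4 / n ^ 2 * T : ℝ) : ℂ) + ((-2 / n : ℝ) : ℂ) * Complex.I := by
      simp only [v]; push_cast; ring
    rw [this]
    simp only [Complex.add_re, Complex.ofReal_re, Complex.re_ofReal_mul, Complex.I_re]
    ring
  have hare : ∀ T, (a T).re = T⁻¹ := by
    intro T
    have : a T = ((T⁻¹ : ℝ) : ℂ) + ((2 / n : ℝ) : ℂ) * Complex.I := by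
      simp only [a]; push_cast; ring
    rw [this]
    simp only [Complex.add_re, Complex.ofReal_re, Complex.re_ofReal_mul, Complex.I_re]
    ring
  have h1 := tendsto_gaussian_average (l := atTop) (v := fun T : ℝ => (T : ℂ))
    (by simpa using! tendsto_id) n _ (periodic_exp_neg_sq_div n)
  have hv : Tendsto (fun T => (v T).re) atTop atTop := by
    simp only [hvre]
    exact tendsto_id.const_mul_atTop (by positivity)
  have h2 := tendsto_gaussian_average hv 2 _ (periodic_exp_half_mul_sq n)
  have hinv : Tendsto (fun T : ℝ => (T : ℂ)⁻¹) atTop (𝓝 0) := by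
    have := (Complex.continuous_ofReal.tendsto 0).comp tendsto_inv_atTop_zero
    simpa [Function.comp_def] using this
  have h3 : Tendsto (fun T : ℝ => (v T / T) ^ (1 / 2 : ℂ)) atTop
      (𝓝 ((((4 / n ^ 2 : ℝ)) : ℂ) ^ (1 / 2 : ℂ))) := by
    refine (continuousAt_cpow_const ?_).tendsto.comp ?_
    · exact Complex.ofReal_mem_slitPlane.mpr (by positivity)
    · have : Tendsto (fun T : ℝ => (4 / n ^ 2 : ℂ) - 2 * Complex.I / n * (T : ℂ)⁻¹) atTop
          (𝓝 ((4 / n ^ 2 : ℂ) - 2 * Complex.I / n * 0)) :=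
        tendsto_const_nhds.sub (hinv.const_mul _)
      rw [mul_zero, sub_zero] at this
      push_cast
      refine this.congr' ?_
      filter_upwards [eventually_gt_atTop 0] with T hT
      have hT' : (T : ℂ) ≠ 0 := by exact_mod_cast hT.ne'
      simp only [v]
      field_simp
  have h4 : Tendsto (fun T : ℝ => (a T) ^ (1 / 2 : ℂ)) atTop
      (𝓝 ((((2 / n : ℝ) : ℂ) * Complex.I) ^ (1 / 2 : ℂ))) := by
    refine (continuousAt_cpow_const ?_).tendsto.comp ?_
    · refine Complex.mem_slitPlane_iff.mpr (Or.inr ?_)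
      rw [Complex.im_ofReal_mul, Complex.I_im]
      positivity
    · have := hinv.add_const (2 * Complex.I / n)
      rw [zero_add] at this
      convert this using 2
      push_cast; ring
  have hsq : (((2 / n : ℝ) : ℂ) * Complex.I) ^ (1 / 2 : ℂ)
      = (1 + Complex.I) / (Real.sqrt n : ℂ) := by
    rw [Complex.ofReal_mul_cpow (by positivity) Complex.I_ne_zero, Complex.I_cpow_half,
      Complex.ofReal_cpow_half (by positivity), Real.sqrt_div (by norm_num)]
    have : ((Real.sqrt 2 : ℝ) : ℂ) ≠ 0 := by
      exact_mod_cast (Real.sqrt_pos.mpr (by norm_num : (0 : ℝ) < 2)).ne'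
    push_cast
    field_simp
  have hfour : (((4 / n ^ 2 : ℝ)) : ℂ) ^ (1 / 2 : ℂ) = 2 / n := by
    rw [Complex.ofReal_cpow_half (by positivity),
      show (4 / n ^ 2 : ℝ) = (2 / n) ^ 2 by ring, Real.sqrt_sq (by positivity)]
    push_cast; rfl
  have hI : (1 + Complex.I) ≠ 0 := by
    intro h
    simpa using congrArg Complex.re h
  have hsn : ((Real.sqrt n : ℝ) : ℂ) ≠ 0 := by
    exact_mod_cast (Real.sqrt_pos.mpr hnR).ne'
  have h5 := (h3.div h4 (by rw [hsq]; exact div_ne_zero hI hsn)).mul h2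
  have heq := tendsto_nhds_unique h1 (h5.congr' ?_)
  · rw [hsq, hfour, div_eq_iff hnC] at heq
    simp only [Fin.sum_univ_two] at heq
    have e1 : Complex.exp (Real.pi * Complex.I * n * (((1 : Fin 2) : ℕ) : ℤ) ^ 2 / 2)
        = Complex.I ^ n := by
      have : (Real.pi * Complex.I * n * (((1 : Fin 2) : ℕ) : ℤ) ^ 2 / 2 : ℂ)
          = n * (Real.pi / 2 * Complex.I) := by
        simp; ring
      rw [this, Complex.exp_nat_mul, Complex.exp_pi_div_two_mul_I]
    rw [e1] at heq
    simp only [Int.cast_natCast, Fin.val_zero, Nat.cast_zero, ne_eq, OfNat.ofNat_ne_zero,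
      not_false_eq_true, zero_pow, mul_zero, zero_div, Complex.exp_zero, Int.cast_zero] at heq
    rw [heq]
    push_cast
    field_simp
  · filter_upwards [eventually_gt_atTop 0] with T hT
    have hT' : (T : ℂ) ≠ 0 := by exact_mod_cast hT.ne'
    have hvr : 0 < (v T).re := by rw [hvre]; positivity
    have har : 0 < (a T).re := by rw [hare]; positivity
    have hv0 : v T ≠ 0 := by intro h; simp [h] at hvr
    have ha0 : a T ≠ 0 := by intro h; simp [h] at har
    have hrel : (a T)⁻¹ = (v T)⁻¹ - n * Complex.I / 2 := by
      have hTa : v T * (n * Complex.I / 2) = T * a T := by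
        simp only [v, a]
        field_simp
        linear_combination (-2 * n : ℂ) * Complex.I_sq
      have hav : a T * (1 - T * a T) = v T := by
        simp only [v, a]
        field_simp
        linear_combination (-4 * T ^ 2 : ℂ) * Complex.I_sq
      refine inv_eq_of_mul_eq_one_right ?_
      rw [mul_sub, ← div_eq_mul_inv, sub_eq_iff_eq_add, div_eq_iff hv0]
      linear_combination (-a T) * hTa + hav
    have hpois := Complex.tsum_exp_neg_quadratic har 0
    simp only [mul_zero, zero_mul, add_zero] at hpois
    have hL : ∀ k : ℤ, Complex.exp (-Real.pi * a T * (k : ℂ) ^ 2)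
        = Complex.exp (-(2 * Real.pi * Complex.I * (k : ℂ) ^ 2 / n))
          * Complex.exp (-Real.pi * (T : ℂ)⁻¹ * (k : ℂ) ^ 2) := by
      intro k
      rw [← Complex.exp_add]
      congr 1
      simp only [a]
      ring
    have hR : ∀ k : ℤ, Complex.exp (-Real.pi / a T * (k : ℂ) ^ 2)
        = Complex.exp (Real.pi * Complex.I * n * (k : ℂ) ^ 2 / 2)
          * Complex.exp (-Real.pi * (v T)⁻¹ * (k : ℂ) ^ 2) := by
      intro k
      rw [← Complex.exp_add, div_eq_mul_inv, hrel]
      congr 1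
      ring
    simp only [hL, hR] at hpois
    rw [hpois]
    have hsplit : v T ^ (1 / 2 : ℂ) = (T : ℂ) ^ (1 / 2 : ℂ) * (v T / T) ^ (1 / 2 : ℂ) := by
      rw [← Complex.ofReal_mul_cpow hT (div_ne_zero hv0 hT'), mul_div_cancel₀ _ hT']
    have hp : ∀ {z : ℂ}, z ≠ 0 → z ^ (1 / 2 : ℂ) ≠ 0 := fun hz => by
      simp [Complex.cpow_eq_zero_iff, hz]
    have q1 := hp hT'
    have q2 := hp (div_ne_zero hv0 hT')
    have q3 := hp ha0
    rw [hsplit]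
    simp only [Pi.div_apply]
    field_simp

lemma Function.Periodic.sum_range_mul {f : ℤ → ℂ} {n : ℕ} (hf : Function.Periodic f (n : ℤ))
    (M : ℕ) : ∑ r ∈ Finset.range (M * n), f r = M * ∑ r ∈ Finset.range n, f r := by
  induction M with
  | zero => simp
  | succ M ih =>
    rw [Nat.succ_mul, Finset.sum_range_add, ih]
    have : ∀ r : ℕ, f ((M * n + r : ℕ) : ℤ) = f r := fun r => by
      push_cast
      rw [add_comm]
      exact hf.int_mul M _
    simp only [this]
    push_cast
    ring

lemma latLift_cast (H : ℕ) [NeZero H] (u : ZMod (H ^ 2)) :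
    ((latLift H u : ℤ) : ZMod (H ^ 2)) = u := by
  have h : (((H : ℤ) ^ 2 : ℤ) : ZMod (H ^ 2)) = 0 := by
    exact_mod_cast ZMod.natCast_self (H ^ 2)
  unfold latLift
  split_ifs
  · simp
  · rw [Int.cast_sub, h]; simp

lemma Function.Periodic.eq_of_zmod_cast_eq {f : ℤ → ℂ} {N : ℕ}
    (hf : Function.Periodic f (N : ℤ)) {a b : ℤ} (h : (a : ZMod N) = b) : f a = f b := by
  obtain ⟨q, hq⟩ := (ZMod.intCast_eq_intCast_iff_dvd_sub a b N).mp h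
  rw [show b = a + q * N by linarith]
  exact (hf.int_mul q a).symm

/-- Translation invariance of complete sums over the lattice. -/
lemma sum_latLift_add {H : ℕ} [NeZero H] {f : ℤ → ℂ}
    (hf : Function.Periodic f ((H ^ 2 : ℕ) : ℤ)) (s : ℤ) :
    ∑ x : ZMod (H ^ 2), f (latLift H x + s) = ∑ r ∈ Finset.range (H ^ 2), f r := by
  have h1 : ∀ x : ZMod (H ^ 2), f (latLift H x + s) = f ((x + (s : ZMod (H ^ 2))).val : ℤ) :=
    fun x => hf.eq_of_zmod_cast_eq (by simp [latLift_cast])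
  simp only [h1]
  refine (Equiv.sum_comp (Equiv.addRight (s : ZMod (H ^ 2)))
    (fun y : ZMod (H ^ 2) => f (y.val : ℤ))).trans ?_
  refine Finset.sum_bij (fun y _ => y.val) (fun y _ => Finset.mem_range.mpr (ZMod.val_lt y))
    (fun _ _ _ _ h => ZMod.val_injective _ h) (fun r hr => ⟨(r : ZMod (H ^ 2)),
      Finset.mem_univ _, ZMod.val_cast_of_lt (Finset.mem_range.mp hr)⟩) (fun _ _ => rfl)

lemma periodic_exp_lattice_gaussian {H : ℕ} [NeZero H] (hH : Even H) (m : ℤ) :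
    Function.Periodic (fun k : ℤ => Complex.exp (-(Real.pi * Complex.I * m * (k : ℂ) ^ 2
      / (H : ℂ) ^ 2))) ((H ^ 2 : ℕ) : ℤ) := by
  intro k
  have hHC : (H : ℂ) ≠ 0 := by exact_mod_cast NeZero.ne H
  obtain ⟨c, hc⟩ := hH
  have hcC : (H : ℂ) = 2 * c := by rw [hc]; push_cast; ring
  refine Complex.exp_eq_exp_iff_exists_int.mpr ⟨-(m * (k + 2 * c ^ 2)), ?_⟩
  push_cast
  field_simp
  rw [hcC]
  ring

/-- The lattice sum of an imaginary Gaussian of positive parameter. -/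
lemma sum_range_lattice_gaussian {H : ℕ} [NeZero H] (hH : Even H) {M n : ℕ}
    (hMn : M * n = 2 * H ^ 2) :
    (H : ℂ)⁻¹ * ∑ r ∈ Finset.range (H ^ 2), Complex.exp (-(Real.pi * Complex.I * M * (r : ℂ) ^ 2
      / (H : ℂ) ^ 2))
      = (Real.sqrt ((M : ℝ) / 2) : ℂ) * (1 + Complex.I ^ n) / (1 + Complex.I) := by
  have hH0 : H ≠ 0 := NeZero.ne H
  have hHC : (H : ℂ) ≠ 0 := by exact_mod_cast hH0
  have hpos : 0 < M * n := by rw [hMn]; positivity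
  have hM0 : M ≠ 0 := by rintro rfl; simp at hpos
  have hn0 : n ≠ 0 := by rintro rfl; simp at hpos
  have hnC : (n : ℂ) ≠ 0 := by exact_mod_cast hn0
  have : NeZero n := ⟨hn0⟩
  have hMnC : (M : ℂ) * n = 2 * H ^ 2 := by exact_mod_cast hMn
  have hMnR : (M : ℝ) * n = 2 * H ^ 2 := by exact_mod_cast hMn
  have h1 := (periodic_exp_lattice_gaussian hH M).sum_range_mul 2
  have h2 := (periodic_exp_neg_sq_div n).sum_range_mul M
  have hterm : ∀ r : ℕ, Complex.exp (-(2 * Real.pi * Complex.I * (r : ℂ) ^ 2 / n))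
      = Complex.exp (-(Real.pi * Complex.I * M * (r : ℂ) ^ 2 / (H : ℂ) ^ 2)) := by
    intro r
    congr 2
    field_simp
    linear_combination (-(r : ℂ) ^ 2) * hMnC
  have hG := sum_exp_neg_sq_div n
  rw [Fin.sum_univ_eq_sum_range
    (fun r : ℕ => Complex.exp (-(2 * Real.pi * Complex.I * (r : ℂ) ^ 2 / n)))] at hG
  simp only [Int.cast_natCast] at h1 h2
  rw [hG, hMn] at h2
  simp only [hterm] at h2
  rw [h2] at h1
  have hs : (M : ℝ) / 2 * Real.sqrt n = H * Real.sqrt (M / 2) := by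
    have hn' : (n : ℝ) = (2 * H / M) ^ 2 * (M / 2) := by
      field_simp
      linear_combination hMnR
    rw [hn', Real.sqrt_mul (by positivity), Real.sqrt_sq (by positivity)]
    field_simp
  have hsC : (M : ℂ) / 2 * Real.sqrt n = H * (Real.sqrt ((M : ℝ) / 2) : ℂ) := by
    simpa using congrArg Complex.ofReal hs
  rw [inv_mul_eq_iff_eq_mul₀ hHC]
  push_cast at h1
  linear_combination (-1 / 2 : ℂ) * h1 + (1 + Complex.I ^ n) / (1 + Complex.I) * hsC

/-- The Fourier transform of an imaginary Gaussian, after completing the square. -/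
lemma Ftrans_imaginary_gaussian_eq_sum {H : ℕ} [NeZero H] (hH : Even H) {m : ℤ} (hm : m ≠ 0)
    (p : ZMod (H ^ 2)) (hp : m ∣ latLift H p) :
    Ftrans H (fun x => Complex.exp (-(Real.pi * Complex.I * (m : ℂ) * latC H x ^ 2))) p
      = (H : ℂ)⁻¹ * (∑ r ∈ Finset.range (H ^ 2),
          Complex.exp (-(Real.pi * Complex.I * m * (r : ℂ) ^ 2 / (H : ℂ) ^ 2)))
        * Complex.exp (Real.pi * Complex.I * latC H p ^ 2 / (m : ℂ)) := by
  have hHC : (H : ℂ) ≠ 0 := by exact_mod_cast NeZero.ne H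
  have hmC : (m : ℂ) ≠ 0 := by exact_mod_cast hm
  obtain ⟨s, hs⟩ := hp
  have h := sum_latLift_add (periodic_exp_lattice_gaussian hH m) s
  simp only [Int.cast_natCast] at h
  rw [← h, Ftrans, Finset.mul_sum, Finset.sum_mul]
  refine Finset.sum_congr rfl fun x _ => ?_
  rw [mul_assoc (H : ℂ)⁻¹, mul_assoc (H : ℂ)⁻¹, ← Complex.exp_add, ← Complex.exp_add]
  congr 2
  simp only [latC, hs]
  push_cast
  field_simp
  ring

/-- For a nonzero integer `m` with `m ∣ 2H²` and `φ_{im}(x) = exp(−iπmx²)`, the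
infinitesimal Fourier transform at a lattice point `p = t/H` with `m ∣ t` is
`(Fφ_{im})(p) = c_{im} · exp(iπp²/m)`, with `c_{im}` given by a Gauss-sum formula. -/
theorem fourier_imaginary_gaussian (H : ℕ) [NeZero H] (hH : Even H)
    (m : ℤ) (hm : m ≠ 0) (hdvd : m ∣ 2 * (H : ℤ) ^ 2)
    (p : ZMod (H ^ 2)) (hp : m ∣ latLift H p) :
    Ftrans H (fun x => Complex.exp (-(Real.pi * Complex.I * (m : ℂ) * latC H x ^ 2))) p
      = (if 0 < m then
            (Real.sqrt ((m : ℝ) / 2) : ℂ) * (1 + Complex.I ^ (2 * (H : ℤ) ^ 2 / m))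
              / (1 + Complex.I)
          else
            (Real.sqrt ((-m : ℝ) / 2) : ℂ) * (1 + (-Complex.I) ^ (2 * (H : ℤ) ^ 2 / (-m)))
              / (1 - Complex.I))
        * Complex.exp (Real.pi * Complex.I * latC H p ^ 2 / (m : ℂ)) := by
  rw [Ftrans_imaginary_gaussian_eq_sum hH hm p hp]
  congr 1
  have hquot : ∀ M : ℕ, M ≠ 0 → (M : ℤ) ∣ 2 * (H : ℤ) ^ 2 →
      ∃ n : ℕ, M * n = 2 * H ^ 2 ∧ 2 * (H : ℤ) ^ 2 / M = n := by
    intro M hM hd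
    obtain ⟨n, hn⟩ : M ∣ 2 * H ^ 2 := by exact_mod_cast hd
    refine ⟨n, hn.symm, ?_⟩
    rw [show 2 * (H : ℤ) ^ 2 = M * n by exact_mod_cast hn]
    exact Int.mul_ediv_cancel_left _ (by exact_mod_cast hM)
  split_ifs with hpos
  · lift m to ℕ using hpos.le
    obtain ⟨n, hMn, hq⟩ := hquot m (by exact_mod_cast hm) hdvd
    rw [hq, zpow_natCast]
    simpa using sum_range_lattice_gaussian hH hMn
  · obtain ⟨M, rfl⟩ : ∃ M : ℕ, m = -(M : ℤ) := ⟨(-m).toNat, by omega⟩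
    obtain ⟨n, hMn, hq⟩ := hquot M (by simpa using hm) (by simpa using hdvd)
    rw [neg_neg, hq, zpow_natCast]
    have h := congrArg (starRingEnd ℂ) (sum_range_lattice_gaussian hH hMn)
    simp only [map_mul, map_sum, map_div₀, map_add, map_pow, map_inv₀, map_one, Complex.conj_I,
      Complex.conj_ofReal, ← Complex.exp_conj, map_neg, map_natCast] at h
    simpa [sub_eq_add_neg] using h
end
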